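/- Let N ≥ 1 and let L ∈ ℝ^{N×N} be the Laplacian matrix of a connected undirected weighted graph, i.e. L is symmetric, has nonpositive off-diagonal entries, satisfies L·1_N = 0, is positive semidefinite, and 0 is a simple eigenvalue of L. Let γ₁, γ₂ ∈ ℝ satisfy γ₂ > γ₁ > 0 and γ₁ − 2γ₂ > −4/μ for every nonzero eigenvalue μ of L. Define F = [[I_N, I_N], [−γ₁L, I_N − γ₂L]] ∈ ℝ^{2N×2N}. Then for every initial condition x⁽⁰⁾ = (p⁽⁰⁾; v⁽⁰⁾) ∈ ℝ^{2N}, the solution x⁽ᵏ⁾ = Fᵏ x⁽⁰⁾ = (p⁽ᵏ⁾; v⁽ᵏ⁾) satisfies lim_{k→∞} ‖(p⁽ᵏ⁾; v⁽ᵏ⁾) − ((1/N)∑_{j=1}^N (p_j⁽⁰⁾ + k·v_j⁽⁰⁾)·1_N ; (1/N)∑_{j=1}^N v_j⁽⁰⁾·1_N)‖ = 0; in particular p_i⁽ᵏ⁾ − p_j⁽ᵏ⁾ → 0 and v_i⁽ᵏ⁾ − v_j⁽ᵏ⁾ → 0 for all i, j. -/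

import Mathlib

open Filter Matrix

/-- The Schur-Cohn (Jury) criterion for a real second-order linear recurrence. -/
theorem tendsto_zero_of_second_order_recurrence {s : ℕ → ℝ} {t d : ℝ}
    (hs : ∀ k, s (k + 2) = t * s (k + 1) - d * s k) (hd : d < 1)
    (ht : t < 1 + d) (ht' : -t < 1 + d) : Tendsto s atTop (nhds 0) := by
  let V : ℕ → ℝ := fun k => (1 + d) * (s (k + 1) ^ 2 + s k ^ 2) - 2 * t * s (k + 1) * s k
  have hV : ∀ k, V (k + 1) = V k - (1 - d) * (s (k + 2) - s k) ^ 2 := by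
    intro k
    simp only [V, show k + 1 + 1 = k + 2 from rfl, hs k]
    ring
  have hV0 : ∀ k, 0 ≤ V k := by
    intro k
    simp only [V]
    nlinarith [mul_nonneg (sub_nonneg.2 ht.le) (sq_nonneg (s (k + 1) + s k)),
      mul_nonneg (sub_nonneg.2 ht'.le) (sq_nonneg (s (k + 1) - s k))]
  have hanti : Antitone V := antitone_nat_of_succ_le fun k => by
    rw [hV]
    nlinarith [mul_nonneg (sub_nonneg.2 hd.le) (sq_nonneg (s (k + 2) - s k))]
  have hlim := tendsto_atTop_ciInf hanti ⟨0, by rintro _ ⟨k, rfl⟩; exact hV0 k⟩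
  have hsq : Tendsto (fun k => (s (k + 2) - s k) ^ 2) atTop (nhds 0) := by
    have h := (hlim.sub (hlim.comp (tendsto_add_atTop_nat 1))).const_mul (1 - d)⁻¹
    rw [sub_self, mul_zero] at h
    refine h.congr fun k => ?_
    have : 1 - d ≠ 0 := (sub_pos.2 hd).ne'
    simp only [Function.comp_apply, hV]
    field_simp
    ring
  have hg : Tendsto (fun k => s (k + 2) - s k) atTop (nhds 0) := by
    rw [tendsto_zero_iff_abs_tendsto_zero]
    have h := hsq.sqrt
    rw [Real.sqrt_zero] at h
    exact h.congr fun k => Real.sqrt_sq_eq_abs _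
  have hpos : 0 < (1 + d) ^ 2 - t ^ 2 := by nlinarith
  have h := (((hg.const_mul (t ^ 2 - (1 + d))).sub
    ((hg.comp (tendsto_add_atTop_nat 1)).const_mul t)).const_mul ((1 + d) ^ 2 - t ^ 2)⁻¹)
  simp only [mul_zero, sub_self] at h
  refine h.congr fun k => ?_
  rw [inv_mul_eq_iff_eq_mul₀ hpos.ne']
  have h3 : s (k + 1 + 2) = t * s (k + 2) - d * s (k + 1) := hs (k + 1)
  simp only [Function.comp_apply, h3, hs k]
  ring

/-- The two-dimensional mode of the consensus dynamics at Laplacian eigenvalue `μ` is stable. -/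
theorem tendsto_zero_of_consensus_mode {a b : ℕ → ℝ} {γ₁ γ₂ μ : ℝ}
    (ha : ∀ k, a (k + 1) = a k + b k)
    (hb : ∀ k, b (k + 1) = b k - γ₁ * (μ * a k) - γ₂ * (μ * b k))
    (hγ₁ : 0 < γ₁) (hγ₁₂ : γ₁ < γ₂) (hμ : 0 < μ) (h : γ₁ - 2 * γ₂ > -4 / μ) :
    Tendsto a atTop (nhds 0) ∧ Tendsto b atTop (nhds 0) := by
  have h4 : -4 < (γ₁ - 2 * γ₂) * μ := (div_lt_iff₀ hμ).1 h
  have hlim : Tendsto a atTop (nhds 0) := by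
    refine tendsto_zero_of_second_order_recurrence (t := 2 - γ₂ * μ)
      (d := 1 - γ₂ * μ + γ₁ * μ) (fun k => ?_) ?_ ?_ ?_
    · rw [show k + 2 = k + 1 + 1 from rfl, ha (k + 1), hb, ha k]
      ring
    · nlinarith
    · nlinarith [mul_pos hγ₁ hμ]
    · nlinarith
  refine ⟨hlim, ?_⟩
  have h' := (hlim.comp (tendsto_add_atTop_nat 1)).sub hlim
  rw [sub_zero] at h'
  refine h'.congr fun k => ?_
  simp [ha]

/-- A sequence of vectors tends to zero if all its coordinates along an orthonormal basis do. -/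
theorem tendsto_zero_of_forall_dotProduct {n : Type*} [Fintype n]
    (w : OrthonormalBasis n ℝ (EuclideanSpace ℝ n)) {e : ℕ → n → ℝ}
    (h : ∀ i, Tendsto (fun k => (w i).ofLp ⬝ᵥ e k) atTop (nhds 0)) :
    Tendsto e atTop (nhds 0) := by
  rw [tendsto_pi_nhds]
  intro j
  have h' : Tendsto (fun k => ∑ i, ((w i).ofLp ⬝ᵥ e k) * (w i).ofLp j) atTop (nhds 0) := by
    simpa using tendsto_finsetSum Finset.univ fun i _ => (h i).mul_const ((w i).ofLp j)
  refine h'.congr fun k => ?_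
  have hrep := congrArg (fun x => x.ofLp j) (w.sum_repr' (WithLp.toLp 2 (e k)))
  simpa [PiLp.inner_apply, dotProduct, mul_comm] using hrep

/-- Zero-mean solutions of the consensus dynamics converge to zero. -/
theorem tendsto_zero_of_consensus_of_sum_eq_zero {n : Type*} [Fintype n] [DecidableEq n]
    [Nonempty n] {L : Matrix n n ℝ} (hrow : L *ᵥ (fun _ => (1 : ℝ)) = 0) (hpsd : L.PosSemidef)
    (hsimple : Module.finrank ℝ (LinearMap.ker (Matrix.toLin' L)) = 1)
    {γ₁ γ₂ : ℝ} (hγ₁ : 0 < γ₁) (hγ₁₂ : γ₁ < γ₂)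
    (hμ : ∀ μ : ℝ, μ ∈ spectrum ℝ L → μ ≠ 0 → γ₁ - 2 * γ₂ > -4 / μ)
    {e f : ℕ → n → ℝ} (he : ∀ k, e (k + 1) = e k + f k)
    (hf : ∀ k, f (k + 1) = f k - γ₁ • (L *ᵥ e k) - γ₂ • (L *ᵥ f k))
    (he0 : ∑ j, e 0 j = 0) (hf0 : ∑ j, f 0 j = 0) :
    Tendsto e atTop (nhds 0) ∧ Tendsto f atTop (nhds 0) := by
  have hsym : Lᵀ = L := (conjTranspose_eq_transpose_of_trivial L).symm.trans hpsd.1.eq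
  have heig : ∀ (μ : ℝ) (w x : n → ℝ), L *ᵥ w = μ • w → w ⬝ᵥ (L *ᵥ x) = μ * (w ⬝ᵥ x) := by
    intro μ w x hw
    rw [dotProduct_mulVec, ← mulVec_transpose, hsym, hw, smul_dotProduct, smul_eq_mul]
  have hsum : ∀ x : n → ℝ, ∑ j, x j = (fun _ => (1 : ℝ)) ⬝ᵥ x := by simp [dotProduct]
  have hones : ∀ x, (fun _ => (1 : ℝ)) ⬝ᵥ (L *ᵥ x) = 0 := by
    intro x
    simpa using heig 0 (fun _ => 1) x (by simpa using hrow)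
  have hzero : ∀ k, (fun _ => (1 : ℝ)) ⬝ᵥ e k = 0 ∧ (fun _ => (1 : ℝ)) ⬝ᵥ f k = 0 := by
    intro k
    induction k with
    | zero => exact ⟨by rw [← hsum, he0], by rw [← hsum, hf0]⟩
    | succ k ih =>
      simp only [he, hf, dotProduct_add, dotProduct_sub, dotProduct_smul, hones, ih.1, ih.2]
      simp
  have hker : ∀ w : n → ℝ, L *ᵥ w = 0 → ∃ c : ℝ, w = c • (fun _ => (1 : ℝ)) := by
    intro w hw
    have hne : (⟨fun _ => 1, by simpa using hrow⟩ : LinearMap.ker (Matrix.toLin' L)) ≠ 0 := by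
      intro h
      have := congrFun (congrArg Subtype.val h) (Classical.arbitrary n)
      simp at this
    obtain ⟨c, hc⟩ := (finrank_eq_one_iff_of_nonzero' _ hne).1 hsimple ⟨w, by simpa using hw⟩
    exact ⟨c, (congrArg Subtype.val hc).symm⟩
  have hmode : ∀ i, Tendsto (fun k => (hpsd.1.eigenvectorBasis i).ofLp ⬝ᵥ e k) atTop (nhds 0) ∧
      Tendsto (fun k => (hpsd.1.eigenvectorBasis i).ofLp ⬝ᵥ f k) atTop (nhds 0) := by
    intro i
    have hw := hpsd.1.mulVec_eigenvectorBasis i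
    by_cases h0 : hpsd.1.eigenvalues i = 0
    · obtain ⟨c, hc⟩ := hker _ (by rw [hw, h0, zero_smul])
      simp only [hc, smul_dotProduct, hzero, smul_zero]
      exact ⟨tendsto_const_nhds, tendsto_const_nhds⟩
    · refine tendsto_zero_of_consensus_mode (fun k => ?_) (fun k => ?_) hγ₁ hγ₁₂
        (lt_of_le_of_ne (hpsd.eigenvalues_nonneg i) (Ne.symm h0))
        (hμ _ (hpsd.1.eigenvalues_mem_spectrum_real i) h0)
      · rw [he, dotProduct_add]
      · rw [hf, dotProduct_sub, dotProduct_sub, dotProduct_smul, dotProduct_smul,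
          heig _ _ _ hw, heig _ _ _ hw, smul_eq_mul, smul_eq_mul]
  exact ⟨tendsto_zero_of_forall_dotProduct _ fun i => (hmode i).1,
    tendsto_zero_of_forall_dotProduct _ fun i => (hmode i).2⟩

/-- consensus for second-order agents over a connected undirected
graph with fixed topology (Lemma 1 / Xie-Wang conditions). -/
theorem stmt_0 (N : ℕ) (hN : 1 ≤ N) (L : Matrix (Fin N) (Fin N) ℝ)
    (hsym : L.IsSymm)
    (hoff : ∀ i j : Fin N, i ≠ j → L i j ≤ 0)
    (hrow : L.mulVec (fun _ => (1 : ℝ)) = 0)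
    (hpsd : L.PosSemidef)
    (hsimple : Module.finrank ℝ (LinearMap.ker (Matrix.toLin' L)) = 1)
    (γ₁ γ₂ : ℝ) (hγ₁ : 0 < γ₁) (hγ₁₂ : γ₁ < γ₂)
    (hμ : ∀ μ : ℝ, μ ∈ spectrum ℝ L → μ ≠ 0 → γ₁ - 2 * γ₂ > -4 / μ)
    (F : Matrix (Fin N ⊕ Fin N) (Fin N ⊕ Fin N) ℝ)
    (hF : F = Matrix.fromBlocks 1 1 (-(γ₁ • L)) (1 - γ₂ • L))
    (x0 : Fin N ⊕ Fin N → ℝ) :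
    Tendsto (fun k : ℕ =>
        ‖(F ^ k).mulVec x0 -
          Sum.elim
            (fun _ : Fin N =>
              (∑ j : Fin N, (x0 (Sum.inl j) + (k : ℝ) * x0 (Sum.inr j))) / (N : ℝ))
            (fun _ : Fin N => (∑ j : Fin N, x0 (Sum.inr j)) / (N : ℝ))‖)
      atTop (nhds 0)
    ∧ (∀ i j : Fin N,
        Tendsto (fun k : ℕ =>
            (F ^ k).mulVec x0 (Sum.inl i) - (F ^ k).mulVec x0 (Sum.inl j))
          atTop (nhds 0)
        ∧ Tendsto (fun k : ℕ =>
            (F ^ k).mulVec x0 (Sum.inr i) - (F ^ k).mulVec x0 (Sum.inr j))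
          atTop (nhds 0)) := by
  have : Nonempty (Fin N) := ⟨⟨0, hN⟩⟩
  have hN0 : (N : ℝ) ≠ 0 := Nat.cast_ne_zero.2 (by omega)
  set P : ℝ := (∑ j : Fin N, x0 (Sum.inl j)) / (N : ℝ) with hP
  set W : ℝ := (∑ j : Fin N, x0 (Sum.inr j)) / (N : ℝ) with hW
  let p : ℕ → Fin N → ℝ := fun k i => (F ^ k).mulVec x0 (Sum.inl i)
  let v : ℕ → Fin N → ℝ := fun k i => (F ^ k).mulVec x0 (Sum.inr i)
  have hstep : ∀ k, (F ^ (k + 1)).mulVec x0 =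
      Sum.elim (p k + v k) (v k - γ₁ • (L *ᵥ p k) - γ₂ • (L *ᵥ v k)) := by
    intro k
    rw [pow_succ', ← mulVec_mulVec]
    have hx : (F ^ k).mulVec x0 = Sum.elim (p k) (v k) := by
      ext (i | i) <;> rfl
    rw [hx, hF, fromBlocks_mulVec]
    ext (i | i)
    · simp
    · simp [sub_mulVec, neg_mulVec, smul_mulVec]
      ring
  have hp : ∀ k, p (k + 1) = p k + v k := fun k => by
    ext i
    simp only [p, hstep, Sum.elim_inl]
  have hv : ∀ k, v (k + 1) = v k - γ₁ • (L *ᵥ p k) - γ₂ • (L *ᵥ v k) := fun k => by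
    ext i
    simp only [v, hstep, Sum.elim_inr]
  have hLshift : ∀ (y : Fin N → ℝ) (c : ℝ), L *ᵥ (y - c • fun _ => (1 : ℝ)) = L *ᵥ y := by
    intro y c
    rw [mulVec_sub, mulVec_smul, hrow, smul_zero, sub_zero]
  obtain ⟨he, hf⟩ := tendsto_zero_of_consensus_of_sum_eq_zero hrow hpsd hsimple hγ₁ hγ₁₂ hμ
    (e := fun k => p k - (P + k * W) • fun _ => (1 : ℝ))
    (f := fun k => v k - W • fun _ => (1 : ℝ))
    (fun k => by
      ext i
      simp [hp]
      ring)
    (fun k => by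
      ext i
      simp only [hLshift, hv, Pi.sub_apply, Pi.smul_apply, smul_eq_mul]
      ring)
    (by simp [p, hP, hN0, mul_div_cancel₀])
    (by simp [v, hW, hN0, mul_div_cancel₀])
  rw [tendsto_pi_nhds] at he hf
  refine ⟨?_, fun i j => ⟨?_, ?_⟩⟩
  · rw [← tendsto_zero_iff_norm_tendsto_zero, tendsto_pi_nhds]
    rintro (i | i)
    · refine (he i).congr fun k => ?_
      simp only [p, hP, hW, Pi.sub_apply, Pi.smul_apply, smul_eq_mul, Sum.elim_inl,
        Finset.sum_add_distrib, ← Finset.mul_sum]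
      ring
    · refine (hf i).congr fun k => ?_
      simp [v, hW]
  · simpa [p] using (he i).sub (he j)
  · simpa [v] using (hf i).sub (hf j)
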